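/- Assume that P is locally compact and that X has the Vitali–Carathéodory property. If E ⊆ P satisfies C_X(E) = 0, then for every ε > 0 there exists an open set U ⊇ E with C_X(U) < ε. -/

import Mathlib

/-!
The capacity is countably quasi-subadditive: take the supremum of the test functions and the sum
of their upper gradients. Since a σ-finite measure charging all balls forces `P` to be separable,
hence σ-compact, it suffices to treat the parts of `E` lying in the interior of a compact set `K`.

Summing test functions for `C_X(E) = 0` together with their upper gradients produces densities of
arbitrarily small norm that are infinite on `E` and have infinite integral along every curve
starting in `E`; by the Vitali–Carathéodory property there is also a lower semicontinuous such
density `ρ`. On the open set `V = {1 < ρ} ∩ interior K ⊇ E` consider the cost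
`u x = inf {∫_γ ρ ds : γ joins x to the complement of V}`, extended by zero off `V`. It has `ρ` as
upper gradient, it is infinite on `E`, and `min u 1 ≤ ρ`. Because `1 ≤ ρ` on `V`, curves in `V` of
bounded cost have bounded length, so Arzelà–Ascoli and Fatou's lemma make `u` lower
semicontinuous. Hence `{1 < u}` is an open neighbourhood of `E` of capacity at most `2 ‖ρ‖_X`.
-/

open MeasureTheory Filter Set Topology Metric ENNReal

noncomputable section

/-- A (non-constant, rectifiable) curve in `P`, parametrized by arc length. -/
structure Curve (P : Type*) [PseudoMetricSpace P] where
  len : ℝ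
  len_pos : 0 < len
  toFun : ℝ → P
  lip : LipschitzOnWith 1 toFun (Set.Icc 0 len)

variable {P : Type*}

/-- The curve integral `∫_γ ρ ds`. -/
def curveLint [PseudoMetricSpace P] (γ : Curve P) (ρ : P → ℝ≥0∞) : ℝ≥0∞ :=
  ∫⁻ t in Set.Icc (0 : ℝ) γ.len, ρ (γ.toFun t)

/-- `g` is an upper gradient of `u`. -/
def IsUpperGradient [PseudoMetricSpace P] [MeasurableSpace P]
    (u : P → EReal) (g : P → ℝ≥0∞) : Prop :=
  Measurable g ∧
    ∀ γ : Curve P, (u (γ.toFun 0) - u (γ.toFun γ.len)).abs ≤ curveLint γ g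

/-- A quasi-Banach function lattice over `(P, μ)` with continuous quasi-norm. -/
structure QBFL (P : Type*) [MeasurableSpace P] (μ : MeasureTheory.Measure P) where
  nrm : (P → EReal) → ℝ≥0∞
  cc : ℝ≥0∞
  one_le_cc : 1 ≤ cc
  cc_lt_top : cc < ⊤
  nrm_eq_zero_iff : ∀ u : P → EReal, Measurable u → (nrm u = 0 ↔ u =ᵐ[μ] 0)
  nrm_smul : ∀ (a : ℝ) (u : P → EReal),
    nrm (fun x => (a : EReal) * u x) = ENNReal.ofReal |a| * nrm u
  nrm_triangle : ∀ u v : P → EReal,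
    nrm (fun x => u x + v x) ≤ cc * (nrm u + nrm v)
  nrm_mono : ∀ u v : P → EReal, (∀ᵐ x ∂μ, (u x).abs ≤ (v x).abs) → nrm u ≤ nrm v
  nrm_rieszFischer : ∀ f : ℕ → P → EReal, (∀ n, ∀ᵐ x ∂μ, 0 ≤ f n x) →
    nrm (fun x => ∑' n, f n x) ≤ ∑' n, cc ^ (n + 1) * nrm (f n)
  nrm_continuous : ∀ (f : ℕ → P → EReal) (u : P → EReal),
    Tendsto (fun n => nrm fun x => f n x - u x) atTop (𝓝 0) →
    Tendsto (fun n => nrm (f n)) atTop (𝓝 (nrm u))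

variable [MetricSpace P] [MeasurableSpace P] {μ : MeasureTheory.Measure P}

/-- The quasi-norm applied to a `ℝ≥0∞`-valued function. -/
def QBFL.nrmE (X : QBFL P μ) (g : P → ℝ≥0∞) : ℝ≥0∞ :=
  X.nrm fun x => (g x : EReal)

/-- The Newtonian quasi-seminorm `‖u‖_{N¹X}`. -/
def QBFL.newt (X : QBFL P μ) (u : P → EReal) : ℝ≥0∞ :=
  X.nrm u + ⨅ g ∈ {g : P → ℝ≥0∞ | IsUpperGradient u g}, X.nrmE g

/-- Membership in the Newtonian space `N¹X`. -/
def QBFL.memN1 (X : QBFL P μ) (u : P → EReal) : Prop :=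
  Measurable u ∧ X.newt u < ⊤

/-- The Sobolev capacity `C_X`. -/
def QBFL.cap (X : QBFL P μ) (E : Set P) : ℝ≥0∞ :=
  ⨅ u ∈ {u : P → EReal | X.memN1 u ∧ ∀ x ∈ E, 1 ≤ u x}, X.newt u


/-- `X` has the Vitali–Carathéodory property: the quasi-norm of every measurable function
is the infimum of the quasi-norms of its lower semicontinuous majorants. -/
def QBFL.VCProp [TopologicalSpace P] (X : QBFL P μ) : Prop :=
  ∀ u : P → EReal, Measurable u →
    X.nrm u =
      ⨅ v ∈ {v : P → EReal | (∀ x, ((u x).abs : EReal) ≤ v x) ∧ LowerSemicontinuous v},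
        X.nrm v

section ExtendedReals

theorem abs_coe_ennreal_ereal (a : ℝ≥0∞) : (a : EReal).abs = a := by
  induction a with
  | top => rfl
  | coe r =>
    change ((r : ℝ) : EReal).abs = _
    rw [EReal.abs_def, abs_of_nonneg r.coe_nonneg, ENNReal.ofReal_coe_nnreal]

theorem coe_tsum_ennreal_ereal {ι : Type*} (f : ι → ℝ≥0∞) :
    ((∑' i, f i : ℝ≥0∞) : EReal) = ∑' i, (f i : EReal) :=
  (ENNReal.summable.map_tsum
    (⟨⟨((↑) : ℝ≥0∞ → EReal), rfl⟩, EReal.coe_ennreal_add⟩ : ℝ≥0∞ →+ EReal)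
    continuous_coe_ennreal_ereal)

theorem toENNReal_le_abs (x : EReal) : x.toENNReal ≤ x.abs := by
  induction x with
  | bot => simp
  | top => simp
  | coe r => exact ENNReal.ofReal_le_ofReal (le_abs_self r)

theorem toENNReal_le_abs_sub_add (x y : EReal) :
    x.toENNReal ≤ (x - y).abs + y.toENNReal := by
  induction y with
  | bot => induction x <;> simp
  | top => simp
  | coe r =>
    calc x.toENNReal = (x - r + r).toENNReal := by rw [EReal.sub_add_cancel]
      _ ≤ (x - r).toENNReal + (r : EReal).toENNReal := EReal.toENNReal_add_le
      _ ≤ (x - r).abs + (r : EReal).toENNReal := by gcongr; exact toENNReal_le_abs _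

theorem abs_coe_ennreal_sub_le {a b c : ℝ≥0∞} (ha : a ≠ ⊤) (hb : b ≠ ⊤) (hab : a ≤ c + b)
    (hba : b ≤ c + a) : ((a : EReal) - b).abs ≤ c := by
  rcases eq_or_ne c ⊤ with rfl | hc
  · exact le_top
  lift a to NNReal using ha
  lift b to NNReal using hb
  lift c to NNReal using hc
  have hab' : (a : ℝ) ≤ c + b := mod_cast hab
  have hba' : (b : ℝ) ≤ c + a := mod_cast hba
  change (((a : ℝ) - (b : ℝ) : ℝ) : EReal).abs ≤ _
  rw [EReal.abs_def]
  exact ENNReal.ofReal_le_of_le_toReal (abs_le.2 ⟨by simp; linarith, by simp; linarith⟩)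

end ExtendedReals

section Separability

theorem exists_maximal_isSeparated {Y : Type*} [PseudoEMetricSpace Y] (ε : ℝ≥0∞) :
    ∃ S : Set Y, Maximal (IsSeparated ε) S :=
  zorn_subset {S | IsSeparated ε S} fun c hc hchain =>
    ⟨⋃₀ c, (pairwise_sUnion hchain.directedOn).2 hc, fun _ hs => subset_sUnion_of_mem hs⟩

theorem countable_of_isSeparated {Y : Type*} [PseudoEMetricSpace Y] [MeasurableSpace Y]
    [OpensMeasurableSpace Y] (μ : Measure Y) [SFinite μ] [μ.IsOpenPosMeasure] {ε : ℝ≥0∞}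
    (hε : ε ≠ 0) {S : Set Y} (hS : IsSeparated ε S) : S.Countable := by
  have hdisj : Pairwise (Function.onFun Disjoint fun x : S => eball (x : Y) (ε / 2)) :=
    fun x y hxy => eball_disjoint (by
      rw [ENNReal.add_halves]
      exact (hS x.2 y.2 (Subtype.coe_injective.ne hxy)).le)
  have hcount := Measure.countable_meas_pos_of_disjoint_iUnion (μ := μ)
    (fun _ => isOpen_eball.measurableSet) hdisj
  have hpos : {x : S | 0 < μ (eball (x : Y) (ε / 2))} = univ := eq_univ_of_forall fun x =>
    isOpen_eball.measure_pos μ ⟨x, mem_eball_self (ENNReal.half_pos hε)⟩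
  rwa [hpos, countable_univ_iff] at hcount

theorem secondCountableTopology_of_isOpenPosMeasure {Y : Type*} [PseudoMetricSpace Y]
    [MeasurableSpace Y] [OpensMeasurableSpace Y] (μ : Measure Y) [SFinite μ]
    [μ.IsOpenPosMeasure] : SecondCountableTopology Y := by
  refine Metric.secondCountable_of_almost_dense_set fun ε hε => ?_
  obtain ⟨S, hS⟩ := exists_maximal_isSeparated (Y := Y) (ε.toNNReal : ℝ≥0∞)
  have hcover : IsCover ε.toNNReal univ S := .of_maximal_isSeparated (by simpa using hS)
  refine ⟨S, countable_of_isSeparated μ (by simpa using hε) hS.prop, fun x => ?_⟩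
  obtain ⟨y, hyS, hy⟩ := hcover (mem_univ x)
  exact ⟨y, hyS, (edist_le_ofReal hε.le).1 hy⟩

end Separability

section Lipschitz

variable {Y : Type*} [PseudoMetricSpace Y]

theorem lipschitzOnWith_Icc_of_Icc_Icc {f : ℝ → Y} {C : NNReal} {a b c : ℝ}
    (hab : LipschitzOnWith C f (Icc a b)) (hbc : LipschitzOnWith C f (Icc b c)) :
    LipschitzOnWith C f (Icc a c) := by
  refine LipschitzOnWith.of_dist_le_mul fun s hs t ht => ?_
  wlog hst : s ≤ t generalizing s t
  · rw [dist_comm, dist_comm s]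
    exact this t ht s hs (le_of_not_ge hst)
  rcases le_total t b with htb | hbt
  · exact hab.dist_le_mul s ⟨hs.1, hst.trans htb⟩ t ⟨ht.1, htb⟩
  rcases le_total b s with hbs | hsb
  · exact hbc.dist_le_mul s ⟨hbs, hs.2⟩ t ⟨hbt, ht.2⟩
  calc dist (f s) (f t) ≤ dist (f s) (f b) + dist (f b) (f t) := dist_triangle _ _ _
    _ ≤ C * dist s b + C * dist b t :=
      add_le_add (hab.dist_le_mul s ⟨hs.1, hsb⟩ b ⟨hs.1.trans hsb, le_rfl⟩)
        (hbc.dist_le_mul b ⟨le_rfl, hbt.trans ht.2⟩ t ⟨hbt, ht.2⟩)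
    _ = C * dist s t := by
      rw [← mul_add, Real.dist_eq, Real.dist_eq, Real.dist_eq, abs_of_nonpos (by linarith),
        abs_of_nonpos (by linarith), abs_of_nonpos (by linarith)]
      ring

theorem exists_subseq_tendstoUniformly_of_lipschitzWith {α Y : Type*} [PseudoMetricSpace α]
    [CompactSpace α] [MetricSpace Y] {C : NNReal} {f : ℕ → α → Y}
    (hf : ∀ n, LipschitzWith C (f n)) {K : Set Y} (hK : IsCompact K) (hfK : ∀ n x, f n x ∈ K) :
    ∃ (F : α → Y) (φ : ℕ → ℕ), StrictMono φ ∧ LipschitzWith C F ∧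
      TendstoUniformly (fun n => f (φ n)) F atTop := by
  let b : ℕ → BoundedContinuousFunction α Y := fun n =>
    BoundedContinuousFunction.mkOfCompact ⟨f n, (hf n).continuous⟩
  have hequi : Equicontinuous ((↑) : range b → α → Y) := by
    refine (LipschitzWith.uniformEquicontinuous _ C ?_).equicontinuous
    rintro ⟨_, n, rfl⟩
    exact hf n
  have hcompact : IsCompact (closure (range b)) := by
    refine BoundedContinuousFunction.arzela_ascoli K hK (range b) ?_ hequi
    rintro _ x ⟨n, rfl⟩
    exact hfK n x
  obtain ⟨F, -, φ, hφ, hlim⟩ := hcompact.tendsto_subseq fun n => subset_closure (mem_range_self n)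
  have hunif : TendstoUniformly (fun n => f (φ n)) F atTop :=
    BoundedContinuousFunction.tendsto_iff_tendstoUniformly.1 hlim
  exact ⟨F, φ, hφ, fun x y => le_of_tendsto ((hunif.tendsto_at x).edist (hunif.tendsto_at y))
    (Eventually.of_forall fun n => hf (φ n) x y), hunif⟩

end Lipschitz

namespace Curve

variable {Y : Type*} [PseudoMetricSpace Y]

/-- The curve `γ` restricted to `[0, t]`. -/
def truncate (γ : Curve Y) (t : ℝ) (ht : t ∈ Ioc 0 γ.len) : Curve Y where
  len := t
  len_pos := ht.1
  toFun := γ.toFun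
  lip := γ.lip.mono (Icc_subset_Icc_right ht.2)

theorem curveLint_truncate_le (γ : Curve Y) {t : ℝ} (ht : t ∈ Ioc 0 γ.len) (ρ : Y → ℝ≥0∞) :
    curveLint (γ.truncate t ht) ρ ≤ curveLint γ ρ :=
  lintegral_mono_set (Icc_subset_Icc_right ht.2)

/-- The curve `γ` traversed backwards. -/
def reverse (γ : Curve Y) : Curve Y where
  len := γ.len
  len_pos := γ.len_pos
  toFun t := γ.toFun (γ.len - t)
  lip s hs t ht := by
    simpa only [edist_sub_left] using
      γ.lip (x := γ.len - s) ⟨sub_nonneg.2 hs.2, sub_le_self _ hs.1⟩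
        (y := γ.len - t) ⟨sub_nonneg.2 ht.2, sub_le_self _ ht.1⟩

theorem curveLint_reverse (γ : Curve Y) (ρ : Y → ℝ≥0∞) :
    curveLint γ.reverse ρ = curveLint γ ρ := by
  have hpre : (γ.len - ·) ⁻¹' Icc 0 γ.len = Icc 0 γ.len := by simp
  have hsub := (Measure.measurePreserving_sub_left volume γ.len).setLIntegral_comp_preimage_emb
    (MeasurableEquiv.subLeft γ.len).measurableEmbedding (fun t => ρ (γ.toFun t)) (Icc 0 γ.len)
  rwa [hpre] at hsub

/-- The curve `γ` followed by `η`. -/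
def append (γ η : Curve Y) (h : γ.toFun γ.len = η.toFun 0) : Curve Y where
  len := γ.len + η.len
  len_pos := add_pos γ.len_pos η.len_pos
  toFun t := if t ≤ γ.len then γ.toFun t else η.toFun (t - γ.len)
  lip := by
    have hη : ∀ t ∈ Icc γ.len (γ.len + η.len),
        (if t ≤ γ.len then γ.toFun t else η.toFun (t - γ.len)) = η.toFun (t - γ.len) := by
      intro t ht
      rcases ht.1.eq_or_lt with rfl | hlt
      · simp [h]
      · exact if_neg hlt.not_ge
    refine lipschitzOnWith_Icc_of_Icc_Icc (b := γ.len) (fun s hs t ht => ?_) fun s hs t ht => ?_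
    · simpa only [if_pos hs.2, if_pos ht.2] using γ.lip hs ht
    · simpa only [hη s hs, hη t ht, edist_sub_right] using
        η.lip (x := s - γ.len) ⟨sub_nonneg.2 hs.1, sub_le_iff_le_add'.2 hs.2⟩
          (y := t - γ.len) ⟨sub_nonneg.2 ht.1, sub_le_iff_le_add'.2 ht.2⟩

theorem append_zero (γ η : Curve Y) (h : γ.toFun γ.len = η.toFun 0) :
    (γ.append η h).toFun 0 = γ.toFun 0 :=
  if_pos γ.len_pos.le

theorem append_len (γ η : Curve Y) (h : γ.toFun γ.len = η.toFun 0) :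
    (γ.append η h).toFun (γ.append η h).len = η.toFun η.len := by
  simp [append, η.len_pos.not_ge]

theorem curveLint_append (γ η : Curve Y) (h : γ.toFun γ.len = η.toFun 0) (ρ : Y → ℝ≥0∞) :
    curveLint (γ.append η h) ρ = curveLint γ ρ + curveLint η ρ := by
  have hfst : ∫⁻ t in Icc 0 γ.len, ρ ((γ.append η h).toFun t) = curveLint γ ρ :=
    setLIntegral_congr_fun measurableSet_Icc fun t ht => congrArg ρ (if_pos ht.2)
  have hsnd : ∫⁻ t in Ioc γ.len (γ.len + η.len), ρ ((γ.append η h).toFun t) = curveLint η ρ := by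
    have hpre : (· - γ.len) ⁻¹' Ioc 0 η.len = Ioc γ.len (γ.len + η.len) := by
      simp [add_comm]
    calc ∫⁻ t in Ioc γ.len (γ.len + η.len), ρ ((γ.append η h).toFun t)
      _ = ∫⁻ t in Ioc γ.len (γ.len + η.len), ρ (η.toFun (t - γ.len)) :=
        setLIntegral_congr_fun measurableSet_Ioc fun t ht => congrArg ρ (if_neg ht.1.not_ge)
      _ = ∫⁻ t in Ioc 0 η.len, ρ (η.toFun t) := by
        rw [← hpre]
        exact (measurePreserving_sub_right volume γ.len).setLIntegral_comp_preimage_emb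
          (measurableEmbedding_subRight γ.len) (fun t => ρ (η.toFun t)) (Ioc 0 η.len)
      _ = curveLint η ρ := setLIntegral_congr Ioc_ae_eq_Icc
  have hdisj : Disjoint (Icc 0 γ.len) (Ioc γ.len (γ.len + η.len)) :=
    disjoint_left.2 fun t ht ht' => ht'.1.not_ge ht.2
  rw [← hfst, ← hsnd, ← lintegral_union measurableSet_Ioc hdisj,
    Icc_union_Ioc_eq_Icc γ.len_pos.le (le_add_of_nonneg_right η.len_pos.le)]
  rfl

/-- The extension of `γ` to the real line by its endpoint values. -/
def extend (γ : Curve Y) (t : ℝ) : Y :=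
  γ.toFun (projIcc 0 γ.len γ.len_pos.le t)

theorem extend_of_mem (γ : Curve Y) {t : ℝ} (ht : t ∈ Icc 0 γ.len) : γ.extend t = γ.toFun t := by
  rw [extend, projIcc_of_mem _ ht]

theorem extend_projIcc (γ : Curve Y) {L : ℝ} (hL : 0 ≤ L) (hlen : γ.len ≤ L) (t : ℝ) :
    γ.extend (projIcc 0 L hL t) = γ.extend t := by
  simp only [extend, coe_projIcc]
  congr 1
  grind

theorem lipschitzWith_extend (γ : Curve Y) : LipschitzWith 1 γ.extend := by
  have h := γ.lip.to_restrict.comp (LipschitzWith.projIcc γ.len_pos.le)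
  rwa [one_mul] at h

theorem aemeasurable [MeasurableSpace Y] [BorelSpace Y] (γ : Curve Y) :
    AEMeasurable γ.toFun (volume.restrict (Icc 0 γ.len)) :=
  γ.lip.continuousOn.aemeasurable measurableSet_Icc

theorem curveLint_tsum [MeasurableSpace Y] [BorelSpace Y] (γ : Curve Y) {ι : Type*} [Countable ι]
    {ρ : ι → Y → ℝ≥0∞} (hρ : ∀ i, Measurable (ρ i)) :
    curveLint γ (fun x => ∑' i, ρ i x) = ∑' i, curveLint γ (ρ i) :=
  lintegral_tsum fun i => (hρ i).comp_aemeasurable γ.aemeasurable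

theorem ofReal_len_le_curveLint (γ : Curve Y) {V : Set Y} (hγ : MapsTo γ.toFun (Ico 0 γ.len) V)
    {ρ : Y → ℝ≥0∞} (hρ : ∀ x ∈ V, 1 ≤ ρ x) : ENNReal.ofReal γ.len ≤ curveLint γ ρ :=
  calc ENNReal.ofReal γ.len = ∫⁻ _ in Ico 0 γ.len, 1 := by simp
    _ ≤ ∫⁻ t in Ico 0 γ.len, ρ (γ.toFun t) :=
      setLIntegral_mono' measurableSet_Ico fun t ht => hρ _ (hγ ht)
    _ ≤ curveLint γ ρ := lintegral_mono_set Ico_subset_Icc_self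

theorem mapsTo_closure (γ : Curve Y) {V : Set Y} (hγ : MapsTo γ.toFun (Ico 0 γ.len) V) :
    MapsTo γ.toFun (Icc 0 γ.len) (closure V) := by
  have hclosure : closure (Ico 0 γ.len) = Icc 0 γ.len := closure_Ico γ.len_pos.ne
  rw [← hclosure]
  exact hγ.closure_of_continuousOn (hclosure ▸ γ.lip.continuousOn)

theorem exists_firstExit (γ : Curve Y) {V : Set Y} (hV : IsOpen V) (hstart : γ.toFun 0 ∈ V)
    (hend : γ.toFun γ.len ∉ V) :
    ∃ η : Curve Y, η.toFun 0 = γ.toFun 0 ∧ MapsTo η.toFun (Ico 0 η.len) V ∧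
      η.toFun η.len ∉ V ∧ ∀ ρ, curveLint η ρ ≤ curveLint γ ρ := by
  have hcompact : IsCompact (Icc 0 γ.len ∩ γ.toFun ⁻¹' Vᶜ) :=
    isCompact_Icc.of_isClosed_subset
      (γ.lip.continuousOn.preimage_isClosed_of_isClosed isClosed_Icc hV.isClosed_compl)
      inter_subset_left
  obtain ⟨τ, ⟨hτ, hτV⟩, hleast⟩ := hcompact.exists_isLeast ⟨γ.len, ⟨γ.len_pos.le, le_rfl⟩, hend⟩
  have hτpos : 0 < τ := hτ.1.lt_of_ne fun h => hτV (h ▸ hstart)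
  refine ⟨γ.truncate τ ⟨hτpos, hτ.2⟩, rfl, fun t ht => ?_, hτV,
    γ.curveLint_truncate_le ⟨hτpos, hτ.2⟩⟩
  by_contra htV
  exact ht.2.not_ge (hleast ⟨⟨ht.1, ht.2.le.trans hτ.2⟩, htV⟩)

theorem curveLint_le_liminf {ι : Type*} {l : Filter ι} [l.IsCountablyGenerated] {γ : ι → Curve Y}
    {η : Curve Y} (hlen : Tendsto (fun i => (γ i).len) l (𝓝 η.len))
    (hlim : ∀ t ∈ Ico 0 η.len, Tendsto (fun i => (γ i).extend t) l (𝓝 (η.toFun t)))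
    {ρ : Y → ℝ≥0∞} (hρ : LowerSemicontinuous ρ) :
    curveLint η ρ ≤ liminf (fun i => curveLint (γ i) ρ) l := by
  let G i := (Icc 0 (γ i).len).indicator fun t => ρ ((γ i).extend t)
  have hGmeas i : Measurable (G i) :=
    (hρ.comp (γ i).lipschitzWith_extend.continuous).measurable.indicator measurableSet_Icc
  have hGint i : ∫⁻ t, G i t = curveLint (γ i) ρ := by
    rw [lintegral_indicator measurableSet_Icc]
    exact setLIntegral_congr_fun measurableSet_Icc fun t ht =>
      congrArg ρ ((γ i).extend_of_mem ht)
  have hGlim : ∀ t ∈ Ico 0 η.len, ρ (η.toFun t) ≤ liminf (fun i => G i t) l := fun t ht => by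
    have hG : ∀ᶠ i in l, ρ ((γ i).extend t) = G i t :=
      (hlen.eventually_const_lt ht.2).mono fun i hi =>
        (indicator_of_mem (s := Icc 0 (γ i).len) ⟨ht.1, hi.le⟩ fun t => ρ ((γ i).extend t)).symm
    rw [← liminf_congr hG]
    exact (hρ.le_liminf _).trans (liminf_le_liminf_of_le (hlim t ht))
  calc curveLint η ρ = ∫⁻ t in Ico 0 η.len, ρ (η.toFun t) :=
        setLIntegral_congr Ico_ae_eq_Icc.symm
    _ ≤ ∫⁻ t in Ico 0 η.len, liminf (fun i => G i t) l := setLIntegral_mono' measurableSet_Ico hGlim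
    _ ≤ ∫⁻ t, liminf (fun i => G i t) l := setLIntegral_le_lintegral _ _
    _ ≤ liminf (fun i => ∫⁻ t, G i t) l := lintegral_liminf_le hGmeas
    _ = liminf (fun i => curveLint (γ i) ρ) l := by simp only [hGint]

theorem exists_subseq_tendstoUniformly {Y : Type*} [MetricSpace Y] {γ : ℕ → Curve Y} {K : Set Y}
    (hK : IsCompact K) (hγK : ∀ n, MapsTo (γ n).toFun (Icc 0 (γ n).len) K) {L : ℝ}
    (hlen : ∀ n, (γ n).len ≤ L) :
    ∃ (l : ℝ) (F : ℝ → Y) (φ : ℕ → ℕ), 0 ≤ l ∧ LipschitzWith 1 F ∧ StrictMono φ ∧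
      Tendsto (fun n => (γ (φ n)).len) atTop (𝓝 l) ∧
      TendstoUniformly (fun n => (γ (φ n)).extend) F atTop := by
  have hL : 0 ≤ L := (γ 0).len_pos.le.trans (hlen 0)
  obtain ⟨F, φ, hφ, hF, hunif⟩ := exists_subseq_tendstoUniformly_of_lipschitzWith (C := 1)
    (f := fun n (t : Icc 0 L) => (γ n).extend t)
    (fun n => by
      have h := (γ n).lipschitzWith_extend.comp (LipschitzWith.subtype_val (Icc 0 L))
      rwa [one_mul] at h)
    hK fun n t => hγK n (projIcc 0 _ (γ n).len_pos.le t).2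
  obtain ⟨l, hl, ψ, hψ, hlim⟩ := (isCompact_Icc (a := 0) (b := L)).tendsto_subseq
    (x := fun n => (γ (φ n)).len) fun n => ⟨(γ _).len_pos.le, hlen _⟩
  have hext : TendstoUniformly (fun n => (γ (φ n)).extend) (F ∘ projIcc 0 L hL) atTop := by
    simpa only [Function.comp_def, extend_projIcc _ hL (hlen _)] using
      hunif.comp (projIcc 0 L hL)
  exact ⟨l, F ∘ projIcc 0 L hL, φ ∘ ψ, hl.1,
    by simpa using hF.comp (LipschitzWith.projIcc hL), hφ.comp hψ, hlim,
    fun u hu => hψ.tendsto_atTop.eventually (hext u hu)⟩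

end Curve

/-- The upper gradient inequality for `[0, ∞]`-valued functions, with the subtraction moved to the
other side: nothing is required of a curve whose final point has `u = ∞`. -/
def IsOneSidedUpperGradient {Y : Type*} [PseudoMetricSpace Y] [MeasurableSpace Y]
    (u g : Y → ℝ≥0∞) : Prop :=
  Measurable g ∧ ∀ γ : Curve Y, u (γ.toFun 0) ≤ curveLint γ g + u (γ.toFun γ.len)

section OneSided

variable {Y : Type*} [PseudoMetricSpace Y] [MeasurableSpace Y]

theorem IsUpperGradient.isOneSidedUpperGradient_toENNReal {u : Y → EReal} {g : Y → ℝ≥0∞}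
    (h : IsUpperGradient u g) : IsOneSidedUpperGradient (fun x => (u x).toENNReal) g :=
  ⟨h.1, fun γ => (toENNReal_le_abs_sub_add _ _).trans (by gcongr; exact h.2 γ)⟩

namespace IsOneSidedUpperGradient

theorem isUpperGradient_coe {u g : Y → ℝ≥0∞} (h : IsOneSidedUpperGradient u g)
    (hu : ∀ x, u x ≠ ⊤) : IsUpperGradient (fun x => (u x : EReal)) g := by
  refine ⟨h.1, fun γ => abs_coe_ennreal_sub_le (hu _) (hu _) (h.2 γ) ?_⟩
  have hrev := h.2 γ.reverse
  rw [γ.curveLint_reverse] at hrev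
  simpa [Curve.reverse] using hrev

theorem min_const {u g : Y → ℝ≥0∞} (h : IsOneSidedUpperGradient u g) (c : ℝ≥0∞) :
    IsOneSidedUpperGradient (fun x => min (u x) c) g := by
  refine ⟨h.1, fun γ => ?_⟩
  rw [← min_add_add_left]
  exact min_le_min (h.2 γ) le_add_self

theorem iSup_tsum {ι : Type*} [Countable ι] {u g : ι → Y → ℝ≥0∞}
    (h : ∀ i, IsOneSidedUpperGradient (u i) (g i)) :
    IsOneSidedUpperGradient (fun x => ⨆ i, u i x) (fun x => ∑' i, g i x) := by
  refine ⟨Measurable.tsum fun i => (h i).1, fun γ => iSup_le fun i => ?_⟩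
  refine ((h i).2 γ).trans (add_le_add ?_ (le_iSup (fun i => u i (γ.toFun γ.len)) i))
  exact lintegral_mono fun t => ENNReal.le_tsum (f := fun i => g i (γ.toFun t)) i

/-- Average the inequality `u (γ 0) ≤ u (γ t) + ∫_γ g ds` over `t`. -/
theorem mul_len_le {u g : Y → ℝ≥0∞} (h : IsOneSidedUpperGradient u g) (γ : Curve Y) :
    u (γ.toFun 0) * ENNReal.ofReal γ.len ≤
      curveLint γ u + curveLint γ g * ENNReal.ofReal γ.len := by
  have hpoint : ∀ t ∈ Icc 0 γ.len, u (γ.toFun 0) ≤ u (γ.toFun t) + curveLint γ g := by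
    intro t ht
    rcases ht.1.eq_or_lt with rfl | hpos
    · exact le_self_add
    · rw [add_comm]
      exact (h.2 (γ.truncate t ⟨hpos, ht.2⟩)).trans
        (add_le_add (γ.curveLint_truncate_le _ g) le_rfl)
  calc u (γ.toFun 0) * ENNReal.ofReal γ.len = ∫⁻ _ in Icc 0 γ.len, u (γ.toFun 0) := by simp
    _ ≤ ∫⁻ t in Icc 0 γ.len, (u (γ.toFun t) + curveLint γ g) :=
      setLIntegral_mono' measurableSet_Icc hpoint
    _ = curveLint γ u + curveLint γ g * ENNReal.ofReal γ.len := by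
      simp [lintegral_add_right _ measurable_const, curveLint]

theorem curveLint_tsum_add_eq_top [BorelSpace Y] {u g : ℕ → Y → ℝ≥0∞}
    (h : ∀ n, IsOneSidedUpperGradient (u n) (g n)) (hu : ∀ n, Measurable (u n)) (γ : Curve Y)
    (hγ : ∀ n, 1 ≤ u n (γ.toFun 0)) :
    curveLint γ (fun x => ∑' n, (u n x + g n x)) = ⊤ := by
  have hlower n : ENNReal.ofReal γ.len ≤
      curveLint γ (fun x => u n x + g n x) * (1 + ENNReal.ofReal γ.len) :=
    calc ENNReal.ofReal γ.len
      _ ≤ u n (γ.toFun 0) * ENNReal.ofReal γ.len :=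
        le_mul_of_one_le_left' (hγ n)
      _ ≤ curveLint γ (u n) + curveLint γ (g n) * ENNReal.ofReal γ.len := (h n).mul_len_le γ
      _ ≤ _ := by
        rw [mul_add, mul_one]
        gcongr
        · exact lintegral_mono fun t => le_self_add
        · exact lintegral_mono fun t => le_add_self
  have htop : curveLint γ (fun x => ∑' n, (u n x + g n x)) * (1 + ENNReal.ofReal γ.len) = ⊤ := by
    rw [γ.curveLint_tsum (ρ := fun n x => u n x + g n x) fun n => (hu n).add (h n).1,
      ← ENNReal.tsum_mul_right, eq_top_iff,
      ← ENNReal.tsum_const_eq_top_of_ne_zero (α := ℕ) (ENNReal.ofReal_pos.2 γ.len_pos).ne']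
    exact ENNReal.tsum_le_tsum hlower
  by_contra hne
  exact ENNReal.mul_ne_top hne (by simp) htop

end IsOneSidedUpperGradient

end OneSided

/-- The least `ρ`-length of a curve from `x` to the complement of `V`. It is set to zero off `V`
by hand, because curves of length zero are excluded. -/
def exitCost {Y : Type*} [PseudoMetricSpace Y] (ρ : Y → ℝ≥0∞) (V : Set Y) : Y → ℝ≥0∞ :=
  V.indicator fun x => ⨅ γ ∈ {γ : Curve Y | γ.toFun 0 = x ∧ γ.toFun γ.len ∉ V}, curveLint γ ρ

section ExitCost

variable {Y : Type*} [PseudoMetricSpace Y] {ρ : Y → ℝ≥0∞} {V : Set Y}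

theorem exitCost_of_notMem {x : Y} (hx : x ∉ V) : exitCost ρ V x = 0 :=
  indicator_of_notMem hx _

theorem exitCost_of_mem {x : Y} (hx : x ∈ V) : exitCost ρ V x =
    ⨅ γ ∈ {γ : Curve Y | γ.toFun 0 = x ∧ γ.toFun γ.len ∉ V}, curveLint γ ρ :=
  indicator_of_mem hx _

theorem exitCost_le_curveLint (γ : Curve Y) (hγ : γ.toFun γ.len ∉ V) :
    exitCost ρ V (γ.toFun 0) ≤ curveLint γ ρ :=
  (indicator_le_self _ _ _).trans (iInf₂_le γ ⟨rfl, hγ⟩)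

theorem isOneSidedUpperGradient_exitCost [MeasurableSpace Y] (hρ : Measurable ρ) (V : Set Y) :
    IsOneSidedUpperGradient (exitCost ρ V) ρ := by
  refine ⟨hρ, fun γ => ?_⟩
  by_cases hend : γ.toFun γ.len ∈ V
  · rw [exitCost_of_mem hend]
    simp only [ENNReal.add_iInf]
    refine le_iInf₂ fun η ⟨hη, hηV⟩ => ?_
    rw [← γ.curveLint_append η hη.symm, ← γ.append_zero η hη.symm]
    exact exitCost_le_curveLint _ (by rwa [Curve.append_len])
  · exact (exitCost_le_curveLint γ hend).trans le_self_add

theorem exitCost_eq_top {x : Y} (hx : x ∈ V)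
    (h : ∀ γ : Curve Y, γ.toFun 0 = x → curveLint γ ρ = ⊤) : exitCost ρ V x = ⊤ := by
  rw [exitCost_of_mem hx]
  exact iInf₂_eq_top.2 fun γ hγ => h γ hγ.1

theorem min_exitCost_one_le (hρ : ∀ x ∈ V, 1 ≤ ρ x) (x : Y) : min (exitCost ρ V x) 1 ≤ ρ x := by
  by_cases hx : x ∈ V
  · exact (min_le_right _ _).trans (hρ x hx)
  · simp [exitCost_of_notMem hx]

theorem exists_curve_of_exitCost_lt (hV : IsOpen V) {x : Y} (hx : x ∈ V) {c : ℝ≥0∞}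
    (hc : exitCost ρ V x < c) :
    ∃ γ : Curve Y, γ.toFun 0 = x ∧ MapsTo γ.toFun (Ico 0 γ.len) V ∧ γ.toFun γ.len ∉ V ∧
      curveLint γ ρ < c := by
  rw [exitCost_of_mem hx] at hc
  simp only [iInf_lt_iff, mem_ofPred_eq, exists_prop] at hc
  obtain ⟨γ, ⟨rfl, hend⟩, hγc⟩ := hc
  obtain ⟨η, hη0, hηV, hηend, hηγ⟩ := γ.exists_firstExit hV hx hend
  exact ⟨η, hη0, hηV, hηend, (hηγ ρ).trans_lt hγc⟩

theorem exitCost_le_of_tendsto {Y : Type*} [MetricSpace Y] {ρ : Y → ℝ≥0∞} {V : Set Y}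
    (hρ : LowerSemicontinuous ρ) (hV : IsOpen V) (hVc : IsCompact (closure V))
    (h1 : ∀ x ∈ V, 1 ≤ ρ x) {γ : ℕ → Curve Y}
    (hγV : ∀ n, MapsTo (γ n).toFun (Ico 0 (γ n).len) V) (hend : ∀ n, (γ n).toFun (γ n).len ∉ V)
    {x : Y} (hx : x ∈ V) (hstart : Tendsto (fun n => (γ n).toFun 0) atTop (𝓝 x))
    {c : ℝ≥0∞} (hc : c ≠ ⊤) (hγc : ∀ n, curveLint (γ n) ρ ≤ c) : exitCost ρ V x ≤ c := by
  have hlen n : (γ n).len ≤ c.toReal :=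
    (ENNReal.ofReal_le_iff_le_toReal hc).1
      (((γ n).ofReal_len_le_curveLint (hγV n) h1).trans (hγc n))
  obtain ⟨l, F, φ, hl, hF, hφ, hlim, hunif⟩ :=
    Curve.exists_subseq_tendstoUniformly hVc (fun n => (γ n).mapsTo_closure (hγV n)) hlen
  have hF0 : F 0 = x := by
    refine tendsto_nhds_unique (hunif.tendsto_at 0) ?_
    simpa only [Curve.extend_of_mem _ (left_mem_Icc.2 (Curve.len_pos _).le), Function.comp_def]
      using hstart.comp hφ.tendsto_atTop
  have hFl : F l ∉ V := by
    refine hV.isClosed_compl.mem_of_tendsto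
      (hunif.tendsto_comp hF.continuous.continuousAt hlim) (Eventually.of_forall fun n => ?_)
    rw [Curve.extend_of_mem _ (right_mem_Icc.2 (Curve.len_pos _).le)]
    exact hend _
  let η : Curve Y :=
    ⟨l, hl.lt_of_ne fun h => hFl (by rwa [← h, hF0]), F, hF.lipschitzOnWith⟩
  calc exitCost ρ V x = exitCost ρ V (η.toFun 0) := by rw [← hF0]
    _ ≤ curveLint η ρ := exitCost_le_curveLint η hFl
    _ ≤ liminf (fun n => curveLint (γ (φ n)) ρ) atTop :=
      Curve.curveLint_le_liminf hlim (fun t _ => hunif.tendsto_at t) hρ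
    _ ≤ c := liminf_le_of_frequently_le' (Frequently.of_forall fun n => hγc _)

theorem lowerSemicontinuous_exitCost {Y : Type*} [MetricSpace Y] {ρ : Y → ℝ≥0∞} {V : Set Y}
    (hρ : LowerSemicontinuous ρ) (hV : IsOpen V) (hVc : IsCompact (closure V))
    (h1 : ∀ x ∈ V, 1 ≤ ρ x) : LowerSemicontinuous (exitCost ρ V) := by
  refine lowerSemicontinuous_iff_isClosed_preimage.2 fun c =>
    IsSeqClosed.isClosed fun y x hy hyx => show exitCost ρ V x ≤ c from
      le_of_forall_gt_imp_ge_of_dense fun d hd => ?_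
  by_cases hx : x ∈ V
  · rcases eq_or_ne d ⊤ with rfl | hd_top
    · exact le_top
    obtain ⟨N, hN⟩ := eventually_atTop.1 (hyx.eventually (hV.mem_nhds hx))
    choose γ hγ0 hγV hγend hγd using fun n =>
      exists_curve_of_exitCost_lt hV (hN (n + N) (Nat.le_add_left N n)) ((hy (n + N)).trans_lt hd)
    refine exitCost_le_of_tendsto hρ hV hVc h1 hγV hγend hx ?_ hd_top fun n => (hγd n).le
    simpa only [hγ0, Function.comp_def] using hyx.comp (tendsto_add_atTop_nat N)
  · simp [exitCost_of_notMem hx]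

end ExitCost

namespace QBFL

section Norm

variable {Ω : Type*} [MeasurableSpace Ω] {ν : Measure Ω} (X : QBFL Ω ν)

theorem exists_pos_tsum_cc_pow_mul_lt {ε : ℝ≥0∞} (hε : ε ≠ 0) {a : ℝ≥0∞} (ha : a ≠ ⊤) :
    ∃ δ : ℕ → ℝ≥0∞, (∀ n, 0 < δ n) ∧ ∑' n, X.cc ^ (n + 1) * (a * δ n) < ε := by
  obtain ⟨δ, hδ, hsum⟩ := ENNReal.exists_pos_tsum_mul_lt_of_countable hε
    (fun n : ℕ => X.cc ^ (n + 1) * a) fun n =>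
      ENNReal.mul_ne_top (ENNReal.pow_ne_top X.cc_lt_top.ne) ha
  exact ⟨fun n => δ n, fun n => ENNReal.coe_pos.2 (hδ n), by simpa only [mul_assoc] using hsum⟩

theorem nrmE_mono {f g : Ω → ℝ≥0∞} (h : f ≤ᵐ[ν] g) : X.nrmE f ≤ X.nrmE g :=
  X.nrm_mono _ _ (h.mono fun x hx => by simpa only [abs_coe_ennreal_ereal] using hx)

theorem nrmE_add_le (f g : Ω → ℝ≥0∞) :
    X.nrmE (fun x => f x + g x) ≤ X.cc * (X.nrmE f + X.nrmE g) := by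
  simpa only [nrmE, EReal.coe_ennreal_add] using
    X.nrm_triangle (fun x => (f x : EReal)) (fun x => (g x : EReal))

theorem nrmE_tsum_le (f : ℕ → Ω → ℝ≥0∞) :
    X.nrmE (fun x => ∑' n, f n x) ≤ ∑' n, X.cc ^ (n + 1) * X.nrmE (f n) := by
  simpa only [nrmE, coe_tsum_ennreal_ereal] using
    X.nrm_rieszFischer (fun n x => (f n x : EReal))
      (fun n => Eventually.of_forall fun x => EReal.coe_ennreal_nonneg _)

theorem nrmE_toENNReal_le (u : Ω → EReal) : X.nrmE (fun x => (u x).toENNReal) ≤ X.nrm u :=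
  X.nrm_mono _ _ (Eventually.of_forall fun x => by
    simpa only [abs_coe_ennreal_ereal] using toENNReal_le_abs (u x))

end Norm

section Capacity

variable (X : QBFL P μ)

theorem cap_mono {E F : Set P} (h : E ⊆ F) : X.cap E ≤ X.cap F :=
  biInf_mono fun _ hu => ⟨hu.1, fun x hx => hu.2 x (h hx)⟩

theorem cap_le_nrmE_add {E : Set P} {u g : P → ℝ≥0∞} (hu : Measurable u)
    (hg : IsOneSidedUpperGradient u g) (h1 : ∀ x ∈ E, 1 ≤ u x) :
    X.cap E ≤ X.nrmE (fun x => min (u x) 1) + X.nrmE g := by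
  rcases eq_or_ne (X.nrmE (fun x => min (u x) 1) + X.nrmE g) ⊤ with htop | htop
  · exact htop ▸ le_top
  have hgrad : IsUpperGradient (fun x => ((min (u x) 1 : ℝ≥0∞) : EReal)) g :=
    (hg.min_const 1).isUpperGradient_coe fun x => ((min_le_right _ _).trans_lt one_lt_top).ne
  have hnewt : X.newt (fun x => ((min (u x) 1 : ℝ≥0∞) : EReal)) ≤
      X.nrmE (fun x => min (u x) 1) + X.nrmE g :=
    add_le_add le_rfl (iInf₂_le g hgrad)
  have hmeas : Measurable fun x => ((min (u x) 1 : ℝ≥0∞) : EReal) :=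
    (hu.min measurable_const).coe_ereal_ennreal
  exact (iInf₂_le _
    ⟨⟨hmeas, hnewt.trans_lt htop.lt_top⟩, fun x hx => by simp [h1 x hx]⟩).trans hnewt

theorem exists_isOneSidedUpperGradient_of_cap_lt {E : Set P} {δ : ℝ≥0∞} (h : X.cap E < δ) :
    ∃ u g : P → ℝ≥0∞, Measurable u ∧ IsOneSidedUpperGradient u g ∧ (∀ x ∈ E, 1 ≤ u x) ∧
      X.nrmE u + X.nrmE g < δ := by
  simp only [cap, newt, ENNReal.add_iInf, iInf_lt_iff, mem_ofPred_eq, exists_prop] at h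
  obtain ⟨u, ⟨⟨hu, -⟩, hu1⟩, g, hg, hδ⟩ := h
  refine ⟨fun x => (u x).toENNReal, g, hu.ereal_toENNReal, hg.isOneSidedUpperGradient_toENNReal,
    fun x hx => ?_, lt_of_le_of_lt (by gcongr; exact X.nrmE_toENNReal_le u) hδ⟩
  have h1 := EReal.toENNReal_le_toENNReal (hu1 x hx)
  rwa [← EReal.coe_ennreal_one, EReal.toENNReal_coe] at h1

theorem cap_iUnion_le_of_lt {E : ℕ → Set P} {δ : ℕ → ℝ≥0∞} (h : ∀ n, X.cap (E n) < δ n) :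
    X.cap (⋃ n, E n) ≤ ∑' n, X.cc ^ (n + 1) * δ n := by
  choose u g hu hg h1 hδ using fun n => X.exists_isOneSidedUpperGradient_of_cap_lt (h n)
  calc X.cap (⋃ n, E n)
    _ ≤ X.nrmE (fun x => min (⨆ n, u n x) 1) + X.nrmE (fun x => ∑' n, g n x) := by
      refine X.cap_le_nrmE_add (Measurable.iSup hu) (.iSup_tsum hg) fun x hx => ?_
      obtain ⟨n, hn⟩ := mem_iUnion.1 hx
      exact (h1 n x hn).trans (le_iSup (fun n => u n x) n)
    _ ≤ X.nrmE (fun x => ∑' n, u n x) + X.nrmE (fun x => ∑' n, g n x) := by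
      gcongr
      exact X.nrmE_mono (.of_forall fun x =>
        (min_le_left _ _).trans (iSup_le fun n => ENNReal.le_tsum n))
    _ ≤ ∑' n, X.cc ^ (n + 1) * X.nrmE (u n) + ∑' n, X.cc ^ (n + 1) * X.nrmE (g n) :=
      add_le_add (X.nrmE_tsum_le u) (X.nrmE_tsum_le g)
    _ = ∑' n, X.cc ^ (n + 1) * (X.nrmE (u n) + X.nrmE (g n)) := by
      simp only [mul_add, ENNReal.tsum_add]
    _ ≤ ∑' n, X.cc ^ (n + 1) * δ n := ENNReal.tsum_le_tsum fun n => by gcongr; exact (hδ n).le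

theorem exists_density_of_cap_eq_zero [BorelSpace P] {E : Set P} (hE : X.cap E = 0) {δ : ℝ≥0∞}
    (hδ : δ ≠ 0) :
    ∃ ρ : P → ℝ≥0∞, Measurable ρ ∧ X.nrmE ρ < δ ∧ (∀ x ∈ E, ρ x = ⊤) ∧
      ∀ γ : Curve P, γ.toFun 0 ∈ E → curveLint γ ρ = ⊤ := by
  obtain ⟨d, hd, hdsum⟩ := X.exists_pos_tsum_cc_pow_mul_lt hδ X.cc_lt_top.ne
  choose u g hu hg h1 hugd using fun n =>
    X.exists_isOneSidedUpperGradient_of_cap_lt (hE.trans_lt (hd n))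
  refine ⟨fun x => ∑' n, (u n x + g n x), Measurable.tsum fun n => (hu n).add (hg n).1, ?_,
    fun x hx => ?_, fun γ hγ =>
      IsOneSidedUpperGradient.curveLint_tsum_add_eq_top hg hu γ fun n => h1 n _ hγ⟩
  · calc X.nrmE (fun x => ∑' n, (u n x + g n x))
      _ ≤ ∑' n, X.cc ^ (n + 1) * X.nrmE (fun x => u n x + g n x) := X.nrmE_tsum_le _
      _ ≤ ∑' n, X.cc ^ (n + 1) * (X.cc * d n) := ENNReal.tsum_le_tsum fun n => by
        gcongr
        exact (X.nrmE_add_le _ _).trans (by gcongr; exact (hugd n).le)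
      _ < δ := hdsum
  · rw [eq_top_iff, ← ENNReal.tsum_const_eq_top_of_ne_zero (α := ℕ) one_ne_zero]
    exact ENNReal.tsum_le_tsum fun n => (h1 n x hx).trans le_self_add

variable {X}

theorem VCProp.exists_lowerSemicontinuous_ge (hVC : X.VCProp) {f : P → ℝ≥0∞} (hf : Measurable f)
    {δ : ℝ≥0∞} (hδ : X.nrmE f < δ) :
    ∃ h : P → ℝ≥0∞, LowerSemicontinuous h ∧ (∀ x, f x ≤ h x) ∧ X.nrmE h < δ := by
  rw [nrmE, hVC _ hf.coe_ereal_ennreal] at hδ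
  simp only [iInf_lt_iff, mem_ofPred_eq, exists_prop, abs_coe_ennreal_ereal] at hδ
  obtain ⟨v, ⟨hfv, hv⟩, hvδ⟩ := hδ
  lift v to P → ℝ≥0∞ using fun x => (EReal.coe_ennreal_nonneg _).trans (hfv x)
  exact ⟨v, fun x y hy => by
    simpa only [EReal.coe_ennreal_lt_coe_ennreal_iff] using
      hv x y (EReal.coe_ennreal_lt_coe_ennreal_iff.2 hy),
    fun x => EReal.coe_ennreal_le_coe_ennreal_iff.1 (hfv x), hvδ⟩

theorem VCProp.exists_isOpen_cap_lt_of_subset_interior [BorelSpace P] (hVC : X.VCProp)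
    {E K : Set P} (hK : IsCompact K) (hEK : E ⊆ interior K) (hE : X.cap E = 0) {ε : ℝ≥0∞}
    (hε : 0 < ε) :
    ∃ U : Set P, IsOpen U ∧ E ⊆ U ∧ X.cap U < ε := by
  obtain ⟨ρ₀, hρ₀, hρ₀ε, hρ₀E, hρ₀γ⟩ :=
    X.exists_density_of_cap_eq_zero hE (ENNReal.half_pos hε.ne').ne'
  obtain ⟨ρ, hρ, hle, hρε⟩ := hVC.exists_lowerSemicontinuous_ge hρ₀ hρ₀ε
  let V : Set P := ρ ⁻¹' Ioi 1 ∩ interior K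
  have hV : IsOpen V := (hρ.isOpen_preimage 1).inter isOpen_interior
  have hVc : IsCompact (closure V) :=
    hK.closure_of_subset (inter_subset_right.trans interior_subset)
  have h1 : ∀ x ∈ V, 1 ≤ ρ x := fun x hx => hx.1.le
  have hEV : E ⊆ V := fun x hx => ⟨(by simp [hρ₀E x hx] : 1 < ρ₀ x).trans_le (hle x), hEK hx⟩
  have hcost : LowerSemicontinuous (exitCost ρ V) := lowerSemicontinuous_exitCost hρ hV hVc h1
  refine ⟨exitCost ρ V ⁻¹' Ioi 1, hcost.isOpen_preimage 1, fun x hx => ?_, ?_⟩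
  · have htop : exitCost ρ V x = ⊤ := exitCost_eq_top (hEV hx) fun γ hγ =>
      top_unique ((hρ₀γ γ (hγ ▸ hx)).ge.trans (lintegral_mono fun t => hle _))
    simp [htop]
  · calc X.cap (exitCost ρ V ⁻¹' Ioi 1)
      _ ≤ X.nrmE (fun x => min (exitCost ρ V x) 1) + X.nrmE ρ :=
        X.cap_le_nrmE_add hcost.measurable (isOneSidedUpperGradient_exitCost hρ.measurable V)
          fun x hx => le_of_lt hx
      _ ≤ X.nrmE ρ + X.nrmE ρ := by gcongr; exact X.nrmE_mono (.of_forall (min_exitCost_one_le h1))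
      _ < ε / 2 + ε / 2 := ENNReal.add_lt_add hρε hρε
      _ = ε := ENNReal.add_halves ε

end Capacity

end QBFL

theorem cap_outer_on_null_general [BorelSpace P] [LocallyCompactSpace P] [SigmaCompactSpace P]
    {X : QBFL P μ} (hVC : X.VCProp) {E : Set P} (hE : X.cap E = 0) {ε : ℝ≥0∞} (hε : 0 < ε) :
    ∃ U : Set P, IsOpen U ∧ E ⊆ U ∧ X.cap U < ε := by
  let K := CompactExhaustion.choice P
  obtain ⟨δ, hδ, hδε⟩ := X.exists_pos_tsum_cc_pow_mul_lt hε.ne' one_ne_top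
  have hnull n : X.cap (E ∩ interior (K n)) = 0 :=
    le_antisymm (hE ▸ X.cap_mono inter_subset_left) bot_le
  choose U hU hEU hUδ using fun n =>
    hVC.exists_isOpen_cap_lt_of_subset_interior (K.isCompact n) inter_subset_right (hnull n) (hδ n)
  refine ⟨⋃ n, U n, isOpen_iUnion hU, fun x hx => ?_, (X.cap_iUnion_le_of_lt hUδ).trans_lt ?_⟩
  · obtain ⟨n, hn⟩ := K.exists_mem x
    exact mem_iUnion.2 ⟨n + 1, hEU (n + 1) ⟨hx, K.subset_interior_succ n hn⟩⟩
  · simpa only [one_mul] using hδε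

/-- If `P` is locally compact and `X` has the Vitali–Carathéodory property,
then the Sobolev capacity is an outer capacity on sets of capacity zero. -/
theorem cap_outer_on_null
    {P : Type*} [MetricSpace P] [MeasurableSpace P] [BorelSpace P] [LocallyCompactSpace P]
    (μ : MeasureTheory.Measure P) [SigmaFinite μ]
    (hball : ∀ (x : P) (r : ℝ), 0 < r → 0 < μ (Metric.ball x r) ∧ μ (Metric.ball x r) < ⊤)
    (X : QBFL P μ) (hVC : X.VCProp)
    (E : Set P) (hE : X.cap E = 0) :
    ∀ ε : ℝ≥0∞, 0 < ε → ∃ U : Set P, IsOpen U ∧ E ⊆ U ∧ X.cap U < ε := by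
  intro ε hε
  have : μ.IsOpenPosMeasure := ⟨fun U hU ⟨x, hx⟩ => by
    obtain ⟨r, hr, hrU⟩ := Metric.isOpen_iff.1 hU x hx
    exact ((hball x r hr).1.trans_le (measure_mono hrU)).ne'⟩
  have : SecondCountableTopology P := secondCountableTopology_of_isOpenPosMeasure μ
  exact cap_outer_on_null_general hVC hE hε

end
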